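/- arXiv:1406.6084 — 2 statements merged into one kernel-verified Lean document; each statement's English description precedes it below -/
import Mathlib

section
/- There exists a universal constant C₁ > 0 with the following property. Let 0 < ζ̲ < 1, ζ̄ > 0, L > 0, S₀ > 0, τ ≥ 1, and let g : ℝ → ℝ be nondecreasing and L-Lipschitz with g(0) = 0. Let 0 < ε ≤ 1 satisfy ε < min(ζ̲, ζ̄) and suppose (ζ̲+ζ̄)/ε is a positive integer; let Û = {−ζ̲ + k·ε : k = 0, 1, …, (ζ̲+ζ̄)/ε}. Define g_τ(x) = g(x), g_{t−1}(x) = sup over risk-neutral probability measures P on [−ζ̲, ζ̄] of ∫ g_t(x·(1+r)) dP(r), and ĝ_τ(x) = g(x), ĝ_{t−1}(x) = sup over risk-neutral probability measures P on Û of ∫ ĝ_t(x·(1+r)) dP(r). Then 0 ≤ g₀(S₀) − ĝ₀(S₀) ≤ C₁·√ε·L·τ·S₀. -/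
/-!
The one-step values are suprema of expectations, so two of them are compared by turning each
competing measure of one problem into a measure of the other. A risk-neutral measure `P` on the
interval `[-ζd, ζu]` becomes a risk-neutral measure on the grid by randomized rounding: a point
`r` between two neighbouring grid points is sent to one of them at random, with the mean kept
equal to `r`. Concretely, the grid point `r_k` receives the mass `∫ hat_k dP`, where the hat
functions `hat_k` form a partition of unity that reproduces linear functions
(`sum_hat`, `sum_mul_hat`). Rounding moves mass by at most `ε`, so for an `L`-Lipschitz payoff the
expectation changes by at most `L * |x| * ε` (`exists_rounding`).

Lipschitz continuity passes through the recursion since `∫ (1 + r) dP = 1` and `1 + r ≥ 0`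
(`stepValue_lip`). For the same reason an error `c * |x|` after one round is an error of at most
`c * |x|` before it, so the one-step errors add up to `τ * L * ε * S₀`. As `ε ≤ 1`, this is at
most `√ε * L * τ * S₀`, and the constant `1` works.
-/

/-- The single-step value of the hedging recursion at price `x`: the supremum of the
expected payoff `∫ h (x * (1 + r)) dP(r)` over risk-neutral probability measures `P`
on the set `A` (i.e. probability measures with `P A = 1` and mean zero). -/
noncomputable def stepValue (A : Set ℝ) (h : ℝ → ℝ) (x : ℝ) : ℝ :=
  sSup {v : ℝ | ∃ P : MeasureTheory.Measure ℝ, MeasureTheory.IsProbabilityMeasure P ∧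
    P A = 1 ∧ (∫ r, r ∂P) = 0 ∧ v = ∫ r, h (x * (1 + r)) ∂P}

/-- The `ε`-grid discretization `{-ζd, -ζd + ε, -ζd + 2ε, …, -ζd + nε}` of the
interval `[-ζd, -ζd + nε]`. -/
def gridSet (ζd ε : ℝ) (n : ℕ) : Set ℝ := {r : ℝ | ∃ k : ℕ, k ≤ n ∧ r = -ζd + k * ε}

open MeasureTheory

/-- `P` is a risk-neutral probability measure on `A`: it has mass one on `A` and mean zero. -/
def RiskNeutral (A : Set ℝ) (P : Measure ℝ) : Prop :=
  IsProbabilityMeasure P ∧ P A = 1 ∧ (∫ r, r ∂P) = 0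

theorem RiskNeutral.mono {A B : Set ℝ} {P : Measure ℝ} (hP : RiskNeutral A P) (h : A ⊆ B) :
    RiskNeutral B P := by
  obtain ⟨h1, h2, h3⟩ := hP
  exact ⟨h1, le_antisymm prob_le_one (h2 ▸ measure_mono h), h3⟩

theorem RiskNeutral.ae_mem {a b : ℝ} {P : Measure ℝ} (hP : RiskNeutral (Set.Icc a b) P) :
    ∀ᵐ r ∂P, r ∈ Set.Icc a b := by
  obtain ⟨h1, h2, h3⟩ := hP
  exact (mem_ae_iff_prob_eq_one measurableSet_Icc).2 h2

theorem RiskNeutral.integrable_id {a b : ℝ} {P : Measure ℝ}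
    (hP : RiskNeutral (Set.Icc a b) P) : Integrable (fun r : ℝ => r) P := by
  have := hP.1
  refine Integrable.of_bound (C := max |a| |b|) (by fun_prop) ?_
  filter_upwards [hP.ae_mem] with r hr
  exact abs_le_max_abs_abs hr.1 hr.2

theorem RiskNeutral.integral_one_add {a b : ℝ} {P : Measure ℝ}
    (hP : RiskNeutral (Set.Icc a b) P) : ∫ r, (1 + r) ∂P = 1 := by
  have := hP.1
  rw [integral_add (integrable_const _) hP.integrable_id, hP.2.2]
  simp

/-- `h` is Lipschitz on the real line with the real constant `L`. -/
def Lip (L : ℝ) (h : ℝ → ℝ) : Prop := ∀ x y, |h x - h y| ≤ L * |x - y|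

theorem Lip.nonneg {L : ℝ} {h : ℝ → ℝ} (hh : Lip L h) : 0 ≤ L := by
  have := hh 1 0
  have h2 := abs_nonneg (h 1 - h 0)
  simp at this
  linarith

theorem Lip.continuous {L : ℝ} {h : ℝ → ℝ} (hh : Lip L h) : Continuous h := by
  have : LipschitzWith ⟨L, hh.nonneg⟩ h := LipschitzWith.of_dist_le_mul fun x y => by
    rw [Real.dist_eq, Real.dist_eq]
    exact hh x y
  exact this.continuous

theorem RiskNeutral.integrable_payoff {a b L : ℝ} {P : Measure ℝ}
    (hP : RiskNeutral (Set.Icc a b) P) {h : ℝ → ℝ} (hh : Lip L h) (x : ℝ) :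
    Integrable (fun r : ℝ => h (x * (1 + r))) P := by
  have := hP.1
  have hc := hh.continuous
  have hi : Integrable (fun r : ℝ => |h 0| + L * |x * (1 + r)|) P :=
    (integrable_const _).add
      ((((integrable_const (1 : ℝ)).add hP.integrable_id).const_mul x).abs.const_mul L)
  refine hi.mono' (by fun_prop) (Filter.Eventually.of_forall fun r => ?_)
  have h1 := hh (x * (1 + r)) 0
  rw [sub_zero] at h1
  have h2 := abs_sub_abs_le_abs_sub (h (x * (1 + r))) (h 0)
  rw [Real.norm_eq_abs]
  linarith

/-- A Lipschitz payoff grows at most linearly in the price, and `1 + r` has mean one and is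
nonnegative on the interval; this makes the expected payoff stable in the payoff and the price. -/
theorem RiskNeutral.integral_payoff_le {a b L c d : ℝ} {P : Measure ℝ}
    (hP : RiskNeutral (Set.Icc a b) P) (ha : -1 ≤ a) {h k : ℝ → ℝ} (hh : Lip L h)
    (hk : Lip L k) (x y : ℝ) (hd : ∀ s, 0 ≤ s → h (x * s) ≤ k (y * s) + d + c * s) :
    ∫ r, h (x * (1 + r)) ∂P ≤ ∫ r, k (y * (1 + r)) ∂P + d + c := by
  have := hP.1
  have hlin : Integrable (fun r : ℝ => 1 + r) P := (integrable_const _).add hP.integrable_id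
  have hki := hP.integrable_payoff hk y
  have hkd : Integrable (fun r : ℝ => k (y * (1 + r)) + d) P := hki.add (integrable_const _)
  calc ∫ r, h (x * (1 + r)) ∂P ≤ ∫ r, (k (y * (1 + r)) + d + c * (1 + r)) ∂P := by
        refine integral_mono_ae (hP.integrable_payoff hh x) (hkd.add (hlin.const_mul c)) ?_
        filter_upwards [hP.ae_mem] with r hr
        exact hd _ (by linarith [hr.1])
    _ = ∫ r, k (y * (1 + r)) ∂P + d + c := by
        rw [integral_add hkd (hlin.const_mul c), integral_add hki (integrable_const _),
          integral_const_mul, hP.integral_one_add]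
        simp

/-- Comparison of one-step values by transfer of competing measures. Since `sSup` has junk values,
it needs a risk-neutral measure on `A` and a bound for the expected payoffs over `B`; the latter
comes from `k` being Lipschitz and `B` being bounded. -/
theorem stepValue_le {A B : Set ℝ} {a b L : ℝ} (ha : -1 ≤ a) {h k : ℝ → ℝ} (hk : Lip L k)
    (hA : ∃ P, RiskNeutral A P) (hB : B ⊆ Set.Icc a b) (x y c : ℝ)
    (H : ∀ P, RiskNeutral A P → ∃ Q, RiskNeutral B Q ∧
      ∫ r, h (x * (1 + r)) ∂P ≤ ∫ r, k (y * (1 + r)) ∂Q + c) :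
    stepValue A h x ≤ stepValue B k y + c := by
  unfold stepValue
  refine csSup_le ?_ ?_
  · obtain ⟨P, h1, h2, h3⟩ := hA
    exact ⟨_, P, h1, h2, h3, rfl⟩
  · rintro v ⟨P, h1, h2, h3, rfl⟩
    obtain ⟨Q, hQ, hle⟩ := H P ⟨h1, h2, h3⟩
    refine hle.trans ?_
    gcongr
    refine le_csSup ?_ ⟨Q, hQ.1, hQ.2.1, hQ.2.2, rfl⟩
    refine ⟨k 0 + L * |y|, ?_⟩
    rintro v ⟨R, h1, h2, h3, rfl⟩
    have hR : RiskNeutral (Set.Icc a b) R := RiskNeutral.mono ⟨h1, h2, h3⟩ hB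
    have := h1
    have := hR.integral_payoff_le (c := L * |y|) (d := 0) ha hk hk y 0 (fun s hs => by
      have h4 := hk (y * s) (0 * s)
      have h5 := le_abs_self (k (y * s) - k (0 * s))
      rw [zero_mul, sub_zero, abs_mul, abs_of_nonneg hs] at h4
      rw [zero_mul] at h5 ⊢
      linarith)
    simpa using this

theorem stepValue_lip {A : Set ℝ} {a b L : ℝ} (ha : -1 ≤ a) {h : ℝ → ℝ} (hh : Lip L h)
    (hA : ∃ P, RiskNeutral A P) (hB : A ⊆ Set.Icc a b) : Lip L (stepValue A h) := by
  have key : ∀ x y, stepValue A h x ≤ stepValue A h y + L * |x - y| := by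
    intro x y
    refine stepValue_le ha hh hA hB x y _ fun P hP => ⟨P, hP, ?_⟩
    have := (hP.mono hB).integral_payoff_le (c := L * |x - y|) (d := 0) ha hh hh x y
      (fun s hs => by
        have h4 := hh (x * s) (y * s)
        have h5 := le_abs_self (h (x * s) - h (y * s))
        rw [← sub_mul, abs_mul, abs_of_nonneg hs] at h4
        linarith)
    simpa using this
  intro x y
  rw [abs_sub_le_iff]
  have h1 := key x y
  have h2 := key y x
  rw [abs_sub_comm] at h2
  constructor <;> linarith

/-- The hat function of height one and half-width one centred at the origin. -/
noncomputable def hat (s : ℝ) : ℝ := max 0 (1 - |s|)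

theorem hat_nonneg (s : ℝ) : 0 ≤ hat s := le_max_left _ _

theorem hat_le_one (s : ℝ) : hat s ≤ 1 := max_le zero_le_one (by linarith [abs_nonneg s])

theorem continuous_hat : Continuous hat := by unfold hat; fun_prop

theorem hat_zero {s : ℝ} (h : 1 ≤ |s|) : hat s = 0 := max_eq_left (by linarith)

theorem hat_left {s : ℝ} (h1 : -1 ≤ s) (h2 : s ≤ 0) : hat s = 1 + s := by
  unfold hat; rw [abs_of_nonpos h2, max_eq_right] <;> linarith

theorem hat_right {s : ℝ} (h1 : 0 ≤ s) (h2 : s ≤ 1) : hat s = 1 - s := by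
  unfold hat; rw [abs_of_nonneg h1, max_eq_right] ; linarith

/-- Partial sums of the integer hats at a point `s ≥ 0`, with and without the weight `k`,
in the three positions of `s` relative to the last hat. -/
theorem sum_hat_aux (n : ℕ) (s : ℝ) (hs : 0 ≤ s) :
    (s ≤ n → ∑ k ∈ Finset.range (n + 1), hat (s - k) = 1 ∧
      ∑ k ∈ Finset.range (n + 1), (k : ℝ) * hat (s - k) = s) ∧
    (n ≤ s → s ≤ n + 1 → ∑ k ∈ Finset.range (n + 1), hat (s - k) = n + 1 - s ∧
      ∑ k ∈ Finset.range (n + 1), (k : ℝ) * hat (s - k) = n * (n + 1 - s)) ∧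
    (n + 1 ≤ s → ∑ k ∈ Finset.range (n + 1), hat (s - k) = 0 ∧
      ∑ k ∈ Finset.range (n + 1), (k : ℝ) * hat (s - k) = 0) := by
  induction n with
  | zero =>
    simp only [zero_add, Finset.sum_range_one, Nat.cast_zero, sub_zero, zero_mul]
    refine ⟨fun h => ?_, fun _ h => ?_, fun h => ?_⟩
    · obtain rfl : s = 0 := le_antisymm h hs
      simp [hat]
    · simp [hat_right hs h]
    · simp [hat_zero (h.trans (le_abs_self s))]
  | succ n ih =>
    obtain ⟨i1, i2, i3⟩ := ih
    simp only [Finset.sum_range_succ _ (n + 1)]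
    push_cast
    refine ⟨fun h => ?_, fun h h' => ?_, fun h => ?_⟩
    · rcases le_total s n with h0 | h0
      · obtain ⟨e1, e2⟩ := i1 h0
        rw [e1, e2, hat_zero (by rw [abs_of_nonpos] <;> linarith)]
        simp
      · obtain ⟨e1, e2⟩ := i2 h0 h
        rw [e1, e2, hat_left (by linarith) (by linarith)]
        constructor <;> ring
    · obtain ⟨e1, e2⟩ := i3 h
      rw [e1, e2, hat_right (by linarith) (by linarith)]
      constructor <;> ring
    · obtain ⟨e1, e2⟩ := i3 (by linarith)
      rw [e1, e2, hat_zero (by rw [abs_of_nonneg] <;> linarith)]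
      simp

theorem sum_hat {n : ℕ} {s : ℝ} (hs : 0 ≤ s) (hn : s ≤ n) :
    ∑ k ∈ Finset.range (n + 1), hat (s - k) = 1 := ((sum_hat_aux n s hs).1 hn).1

theorem sum_mul_hat {n : ℕ} {s : ℝ} (hs : 0 ≤ s) (hn : s ≤ n) :
    ∑ k ∈ Finset.range (n + 1), (k : ℝ) * hat (s - k) = s := ((sum_hat_aux n s hs).1 hn).2

/-- The finitely supported measure with mass `w k` at the point `p k` for `k ≤ n`. -/
noncomputable def atoms (n : ℕ) (w p : ℕ → ℝ) : Measure ℝ :=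
  ∑ k ∈ Finset.range (n + 1), ENNReal.ofReal (w k) • Measure.dirac (p k)

theorem integral_atoms (n : ℕ) (w p : ℕ → ℝ) (hw : ∀ k, 0 ≤ w k) (φ : ℝ → ℝ) :
    ∫ r, φ r ∂(atoms n w p) = ∑ k ∈ Finset.range (n + 1), w k * φ (p k) := by
  unfold atoms
  rw [integral_finsetSum_measure]
  · refine Finset.sum_congr rfl fun k _ => ?_
    rw [integral_smul_measure, integral_dirac, ENNReal.toReal_ofReal (hw k), smul_eq_mul]
  · intro k _
    exact (integrable_dirac (by simp)).smul_measure ENNReal.ofReal_ne_top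

theorem atoms_apply (n : ℕ) (w p : ℕ → ℝ) (hw : ∀ k, 0 ≤ w k)
    (hs : ∑ k ∈ Finset.range (n + 1), w k = 1) {A : Set ℝ} (hA : ∀ k ≤ n, p k ∈ A) :
    atoms n w p A = 1 := by
  unfold atoms
  rw [Measure.finsetSum_apply]
  have : ∀ k ∈ Finset.range (n + 1),
      (ENNReal.ofReal (w k) • Measure.dirac (p k)) A = ENNReal.ofReal (w k) := by
    intro k hk
    rw [Measure.smul_apply, Measure.dirac_apply_of_mem (hA k (by simp at hk; omega))]
    simp
  rw [Finset.sum_congr rfl this, ← ENNReal.ofReal_sum_of_nonneg fun k _ => hw k, hs]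
  simp

/-- Randomized rounding to the grid with the mean preserved: expected payoffs of Lipschitz
functions change by at most the Lipschitz constant times the mesh. -/
theorem exists_rounding {ζd ζu ε : ℝ} {n : ℕ} (hε : 0 < ε) (hn : ζd + ζu = n * ε)
    {P : Measure ℝ} (hP : RiskNeutral (Set.Icc (-ζd) ζu) P) :
    ∃ Q, RiskNeutral (gridSet ζd ε n) Q ∧ ∀ (L : ℝ) (h : ℝ → ℝ) (x : ℝ), Lip L h →
      ∫ r, h (x * (1 + r)) ∂P ≤ ∫ r, h (x * (1 + r)) ∂Q + L * ε * |x| := by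
  have := hP.1
  set H : ℕ → ℝ → ℝ := fun k r => hat ((r + ζd) / ε - k) with hH
  set p : ℕ → ℝ := fun k => -ζd + k * ε with hp
  have hHi : ∀ k, Integrable (H k) P := fun k => by
    refine Integrable.of_bound (C := 1)
      (continuous_hat.comp (by fun_prop : Continuous fun r : ℝ =>
        (r + ζd) / ε - k)).aestronglyMeasurable (Filter.Eventually.of_forall fun r => ?_)
    rw [Real.norm_eq_abs, abs_of_nonneg (hat_nonneg _)]
    exact hat_le_one _
  have hw : ∀ k, 0 ≤ ∫ r, H k r ∂P := fun k => integral_nonneg fun r => hat_nonneg _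
  have hmem : ∀ r ∈ Set.Icc (-ζd) ζu, 0 ≤ (r + ζd) / ε ∧ (r + ζd) / ε ≤ n := by
    intro r hr
    refine ⟨div_nonneg (by linarith [hr.1]) hε.le, ?_⟩
    rw [div_le_iff₀ hε]
    linarith [hr.2]
  have hswap : ∀ φ : ℝ → ℝ, ∑ k ∈ Finset.range (n + 1), (∫ r, H k r ∂P) * φ (p k) =
      ∫ r, ∑ k ∈ Finset.range (n + 1), H k r * φ (p k) ∂P := by
    intro φ
    rw [integral_finsetSum _ fun k _ => (hHi k).mul_const _]
    exact Finset.sum_congr rfl fun k _ => (integral_mul_const _ _).symm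
  have hsum : ∑ k ∈ Finset.range (n + 1), ∫ r, H k r ∂P = 1 := by
    have h1 := hswap fun _ => 1
    simp only [mul_one] at h1
    rw [h1]
    have : ∫ r, ∑ k ∈ Finset.range (n + 1), H k r ∂P = ∫ r, (1 : ℝ) ∂P := by
      refine integral_congr_ae ?_
      filter_upwards [hP.ae_mem] with r hr
      exact sum_hat (hmem r hr).1 (hmem r hr).2
    rw [this]
    simp
  refine ⟨atoms n (fun k => ∫ r, H k r ∂P) p, ⟨⟨?_⟩, ?_, ?_⟩, ?_⟩
  · exact atoms_apply n _ p hw hsum fun k _ => Set.mem_univ _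
  · exact atoms_apply n _ p hw hsum fun k hk => ⟨k, hk, rfl⟩
  · rw [integral_atoms n _ p hw, hswap fun r => r, ← hP.2.2]
    refine integral_congr_ae ?_
    filter_upwards [hP.ae_mem] with r hr
    have h1 := sum_hat (hmem r hr).1 (hmem r hr).2
    have h2 := sum_mul_hat (hmem r hr).1 (hmem r hr).2
    calc ∑ k ∈ Finset.range (n + 1), H k r * p k
        = -ζd * ∑ k ∈ Finset.range (n + 1), hat ((r + ζd) / ε - k) +
          ε * ∑ k ∈ Finset.range (n + 1), (k : ℝ) * hat ((r + ζd) / ε - k) := by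
          rw [Finset.mul_sum, Finset.mul_sum, ← Finset.sum_add_distrib]
          exact Finset.sum_congr rfl fun k _ => by simp only [hH, hp]; ring
      _ = r := by rw [h1, h2]; field_simp; ring
  · intro L h x hh
    have hL := hh.nonneg
    rw [integral_atoms n _ p hw, hswap fun r => h (x * (1 + r))]
    have hI : Integrable
        (fun r => ∑ k ∈ Finset.range (n + 1), H k r * h (x * (1 + p k))) P :=
      integrable_finsetSum _ fun k _ => (hHi k).mul_const _
    have : ∫ r, ∑ k ∈ Finset.range (n + 1), H k r * h (x * (1 + p k)) ∂P + L * ε * |x| =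
        ∫ r, (∑ k ∈ Finset.range (n + 1), H k r * h (x * (1 + p k)) + L * ε * |x|) ∂P := by
      rw [integral_add hI (integrable_const _)]
      simp
    rw [this]
    refine integral_mono_ae (hP.integrable_payoff hh x) (hI.add (integrable_const _)) ?_
    filter_upwards [hP.ae_mem] with r hr
    have h1 : ∑ k ∈ Finset.range (n + 1), H k r = 1 := sum_hat (hmem r hr).1 (hmem r hr).2
    calc h (x * (1 + r)) = ∑ k ∈ Finset.range (n + 1), H k r * h (x * (1 + r)) := by
          rw [← Finset.sum_mul, h1, one_mul]
      _ ≤ ∑ k ∈ Finset.range (n + 1), H k r * (h (x * (1 + p k)) + L * ε * |x|) := by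
          refine Finset.sum_le_sum fun k _ => ?_
          -- Only grid points within distance `ε` of `r` carry weight.
          rcases le_total 1 |(r + ζd) / ε - k| with h2 | h2
          · simp only [hH, hat_zero h2, zero_mul, le_refl]
          · refine mul_le_mul_of_nonneg_left ?_ (hat_nonneg _)
            have h3 : |r - p k| ≤ ε := by
              have : r - p k = ε * ((r + ζd) / ε - k) := by
                simp only [hp]; field_simp; ring
              rw [this, abs_mul, abs_of_pos hε]
              exact mul_le_of_le_one_right hε.le h2
            have h4 := (le_abs_self _).trans (hh (x * (1 + r)) (x * (1 + p k)))
            have h5 : |x * (1 + r) - x * (1 + p k)| ≤ |x| * ε := by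
              rw [← mul_sub, abs_mul, add_sub_add_left_eq_sub]
              exact mul_le_mul_of_nonneg_left h3 (abs_nonneg x)
            have h6 := mul_le_mul_of_nonneg_left h5 hL
            linarith
      _ = ∑ k ∈ Finset.range (n + 1), H k r * h (x * (1 + p k)) + L * ε * |x| := by
          simp only [mul_add, Finset.sum_add_distrib]
          rw [← Finset.sum_mul, h1, one_mul]

theorem stmt_12 :
    ∃ C₁ : ℝ, 0 < C₁ ∧
      ∀ (ζd ζu L S₀ ε : ℝ) (τ n : ℕ) (g : ℝ → ℝ) (G Ghat : ℕ → ℝ → ℝ),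
        0 < ζd → ζd < 1 → 0 < ζu → 0 < L → 0 < S₀ → 1 ≤ τ →
        0 < ε → ε ≤ 1 → ε < min ζd ζu → 0 < n → ζd + ζu = n * ε →
        Monotone g → (∀ x y, |g x - g y| ≤ L * |x - y|) → g 0 = 0 →
        (∀ x, G τ x = g x) →
        (∀ t < τ, ∀ x, G t x = stepValue (Set.Icc (-ζd) ζu) (G (t + 1)) x) →
        (∀ x, Ghat τ x = g x) →
        (∀ t < τ, ∀ x, Ghat t x = stepValue (gridSet ζd ε n) (Ghat (t + 1)) x) →
        0 ≤ G 0 S₀ - Ghat 0 S₀ ∧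
          G 0 S₀ - Ghat 0 S₀ ≤ C₁ * Real.sqrt ε * L * τ * S₀ := by
  refine ⟨1, one_pos, ?_⟩
  intro ζd ζu L S₀ ε τ n g G Ghat hd hd1 hu hL hS _ hε hε1 _ _ hn _ hg _ hG hGs hF hFs
  have ha : -1 ≤ -ζd := by linarith
  have hsub : gridSet ζd ε n ⊆ Set.Icc (-ζd) ζu := by
    rintro r ⟨k, hk, rfl⟩
    have h1 : (k : ℝ) * ε ≤ n * ε := mul_le_mul_of_nonneg_right (by exact_mod_cast hk) hε.le
    have h2 : 0 ≤ (k : ℝ) * ε := by positivity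
    exact ⟨by linarith, by linarith⟩
  have hneI : RiskNeutral (Set.Icc (-ζd) ζu) (Measure.dirac 0) := by
    refine ⟨inferInstance, Measure.dirac_apply_of_mem ⟨by linarith, hu.le⟩, ?_⟩
    simp
  have hneG : ∃ P, RiskNeutral (gridSet ζd ε n) P := by
    obtain ⟨Q, hQ, -⟩ := exists_rounding hε hn hneI
    exact ⟨Q, hQ⟩
  have key : ∀ j t : ℕ, t + j = τ → Lip L (G t) ∧ Lip L (Ghat t) ∧
      ∀ x, Ghat t x ≤ G t x ∧ G t x ≤ Ghat t x + j * (L * ε) * |x| := by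
    intro j
    induction j with
    | zero =>
      intro t ht
      obtain rfl : t = τ := by omega
      have e1 : G t = g := funext hG
      have e2 : Ghat t = g := funext hF
      rw [e1, e2]
      exact ⟨hg, hg, fun x => by simp⟩
    | succ j ih =>
      intro t ht
      obtain ⟨l1, l2, hx⟩ := ih (t + 1) (by omega)
      have e1 : G t = stepValue (Set.Icc (-ζd) ζu) (G (t + 1)) := funext (hGs t (by omega))
      have e2 : Ghat t = stepValue (gridSet ζd ε n) (Ghat (t + 1)) :=
        funext (hFs t (by omega))
      rw [e1, e2]
      refine ⟨stepValue_lip ha l1 ⟨_, hneI⟩ subset_rfl, stepValue_lip ha l2 hneG hsub,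
        fun x => ⟨?_, ?_⟩⟩
      · have := stepValue_le ha l1 (h := Ghat (t + 1)) hneG
          (subset_refl (Set.Icc (-ζd) ζu)) x x 0 fun P hP => ⟨P, hP.mono hsub, by
            have := (hP.mono hsub).integral_payoff_le (c := 0) (d := 0) ha l2 l1 x x
              (fun s _ => by linarith [(hx (x * s)).1])
            linarith⟩
        linarith
      · refine stepValue_le ha l2 ⟨_, hneI⟩ hsub x x _ fun P hP => ?_
        obtain ⟨Q, hQ, hle⟩ := exists_rounding hε hn hP
        refine ⟨Q, hQ, ?_⟩
        have h1 := hle L _ x l1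
        have h2 := (hQ.mono hsub).integral_payoff_le (c := j * (L * ε) * |x|) (d := 0)
          ha l1 l2 x x (fun s hs => by
            have := (hx (x * s)).2
            rw [abs_mul, abs_of_nonneg hs] at this
            linarith)
        push_cast
        linarith
  obtain ⟨-, -, h⟩ := key τ 0 (by omega)
  obtain ⟨h1, h2⟩ := h S₀
  rw [abs_of_pos hS] at h2
  refine ⟨by linarith, ?_⟩
  have h3 : ε ≤ Real.sqrt ε := Real.le_sqrt_of_sq_le (by nlinarith)
  have h4 : ε * (L * τ * S₀) ≤ Real.sqrt ε * (L * τ * S₀) :=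
    mul_le_mul_of_nonneg_right h3 (by positivity)
  linarith
end

section
/- Let U ⊆ ℝ be a nonempty compact set containing at least one nonpositive element and at least one nonnegative element, let g : ℝ → ℝ be continuous, and let S₀ > 0. Define Φ(Δ, θ) = ⨆_{r ∈ U} ((g(S₀·(1+r)) − Δ·r)·(1−θ) + g(S₀)·θ) for Δ ∈ ℝ and θ ∈ {0, 1}. Then ⨅_{Δ ∈ ℝ} max_{θ ∈ {0,1}} Φ(Δ, θ) = max_{θ ∈ {0,1}} ⨅_{Δ ∈ ℝ} Φ(Δ, θ) = max( sup { ∫ g(S₀·(1+r)) dP(r) : P a risk-neutral probability measure on U }, g(S₀) ). -/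
/-!
The branch `θ = 1` has the constant payoff `g S₀`, and `x ↦ max x (g S₀)` is continuous and
monotone, so it commutes with the infimum over `Δ`. What remains is the superhedging duality
`⨅ Δ, sup_{r ∈ U} (f r - Δ r) = sup_P ∫ f dP` for `f r = g (S₀ (1 + r))`.

The inequality `≥` is integration of `f r - Δ r ≤ sup` against a risk-neutral `P`
(`integral_le_iSup_sub`). For `≤`, the set `momentSet U f` of pairs `(∫ r dP, ∫ f dP)` is convex
and compact and contains the graph of `f` over `U`. If `c` exceeds every risk-neutral price, this
set misses the closed vertical ray `{0} × [c, ∞)`, and a strictly separating line cannot be vertical because `U` meets both half-lines; its slope is a hedge `Δ`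
with `f r - Δ r ≤ c` on `U` (`exists_hedge`).
-/

open MeasureTheory

/-- The adversary's payoff in the single-round American option upper-bound game:
`Φ(Δ, θ) = ⨆ r ∈ U, ((g (S₀ (1 + r)) - Δ r) (1 - θ) + g S₀ θ)`, where `θ ∈ {0, 1}`
is the early-exercise decision. -/
noncomputable def amPhi (U : Set ℝ) (g : ℝ → ℝ) (S₀ Δ θ : ℝ) : ℝ :=
  ⨆ r : U, ((g (S₀ * (1 + (r : ℝ))) - Δ * (r : ℝ)) * (1 - θ) + g S₀ * θ)

/-- The pairs `(∫ r dP, ∫ f dP)`, where `P` ranges over the probability measures carried by `U`. -/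
def momentSet (U : Set ℝ) (f : ℝ → ℝ) : Set (ℝ × ℝ) :=
  {p | ∃ P : Measure ℝ, IsProbabilityMeasure P ∧ P U = 1 ∧ ∫ r, r ∂P = p.1 ∧ ∫ r, f r ∂P = p.2}

lemma ae_mem_of_prob_eq_one {U : Set ℝ} (hcomp : IsCompact U) {P : Measure ℝ}
    [IsProbabilityMeasure P] (hP : P U = 1) : ∀ᵐ r ∂P, r ∈ U :=
  (mem_ae_iff_prob_eq_one hcomp.measurableSet).2 hP

lemma integrable_of_prob_eq_one {U : Set ℝ} (hcomp : IsCompact U) {P : Measure ℝ}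
    [IsProbabilityMeasure P] (hP : P U = 1) {f : ℝ → ℝ} (hf : Continuous f) : Integrable f P := by
  have h : IntegrableOn f U P := hf.continuousOn.integrableOn_compact hcomp
  rwa [IntegrableOn, Measure.restrict_eq_self_of_ae_mem (ae_mem_of_prob_eq_one hcomp hP)] at h

lemma convex_momentSet {U : Set ℝ} (hcomp : IsCompact U) {f : ℝ → ℝ} (hf : Continuous f) :
    Convex ℝ (momentSet U f) := by
  rintro ⟨x₁, y₁⟩ ⟨P, hP, hPU, hP1, hP2⟩ ⟨x₂, y₂⟩ ⟨Q, hQ, hQU, hQ1, hQ2⟩ a b ha hb hab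
  have hab' : ENNReal.ofReal a + ENNReal.ofReal b = 1 := by
    rw [← ENNReal.ofReal_add ha hb, hab, ENNReal.ofReal_one]
  have key : ∀ h : ℝ → ℝ, Continuous h →
      ∫ r, h r ∂(ENNReal.ofReal a • P + ENNReal.ofReal b • Q)
        = a * ∫ r, h r ∂P + b * ∫ r, h r ∂Q := by
    intro h hh
    rw [integral_add_measure
      ((integrable_of_prob_eq_one hcomp hPU hh).smul_measure ENNReal.ofReal_ne_top)
      ((integrable_of_prob_eq_one hcomp hQU hh).smul_measure ENNReal.ofReal_ne_top),
      integral_smul_measure, integral_smul_measure, ENNReal.toReal_ofReal ha,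
      ENNReal.toReal_ofReal hb, smul_eq_mul, smul_eq_mul]
  refine ⟨ENNReal.ofReal a • P + ENNReal.ofReal b • Q, ⟨by simpa using hab'⟩,
    by simpa [hPU, hQU] using hab', ?_, ?_⟩
  · simpa [hP1, hQ1] using key (fun r => r) continuous_id
  · simpa [hP2, hQ2] using key f hf

/-- Compactness comes from that of the space of probability measures on the compact space `U`,
the two moments being continuous for weak convergence. -/
lemma isCompact_momentSet {U : Set ℝ} (hcomp : IsCompact U) {f : ℝ → ℝ} (hf : Continuous f) :
    IsCompact (momentSet U f) := by
  have : CompactSpace U := isCompact_iff_compactSpace.mp hcomp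
  have hU := hcomp.measurableSet
  have hcont : ∀ h : ℝ → ℝ, Continuous h →
      Continuous fun μ : ProbabilityMeasure U => ∫ r : U, h r ∂(μ : Measure U) := fun h hh =>
    ProbabilityMeasure.continuous_integral_boundedContinuousFunction
      (BoundedContinuousFunction.mkOfCompact ⟨fun r : U => h r, by fun_prop⟩)
  have heq : momentSet U f = Set.range fun μ : ProbabilityMeasure U =>
      (∫ r : U, (r : ℝ) ∂(μ : Measure U), ∫ r : U, f r ∂(μ : Measure U)) := by
    ext ⟨x, y⟩
    constructor
    · rintro ⟨P, hP, hPU, hx, hy⟩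
      have hint : ∀ h : ℝ → ℝ, ∫ r : U, h r ∂(P.comap Subtype.val) = ∫ r, h r ∂P := fun h => by
        rw [integral_subtype_comap hU,
          Measure.restrict_eq_self_of_ae_mem (ae_mem_of_prob_eq_one hcomp hPU)]
      have hprob : IsProbabilityMeasure (P.comap (Subtype.val : U → ℝ)) :=
        ⟨by rw [comap_subtype_coe_apply hU, Set.image_univ, Subtype.range_coe, hPU]⟩
      exact ⟨⟨_, hprob⟩, Prod.ext ((hint fun r => r).trans hx) ((hint f).trans hy)⟩
    · rintro ⟨μ, hμ⟩
      rw [Prod.mk.injEq] at hμ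
      have hemb := MeasurableEmbedding.subtype_coe hU
      refine ⟨(μ : Measure U).map Subtype.val,
        Measure.isProbabilityMeasure_map measurable_subtype_coe.aemeasurable, ?_, ?_, ?_⟩
      · rw [hemb.map_apply, Subtype.coe_preimage_self, measure_univ]
      · rw [hemb.integral_map]; exact hμ.1
      · rw [hemb.integral_map]; exact hμ.2
  rw [heq]
  exact isCompact_range ((hcont (fun r => r) continuous_id).prodMk (hcont f hf))

lemma mem_momentSet {U : Set ℝ} (f : ℝ → ℝ) {r : ℝ} (hr : r ∈ U) : (r, f r) ∈ momentSet U f :=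
  ⟨Measure.dirac r, inferInstance, by simp [hr], by simp, by simp⟩

lemma exists_zero_mem_momentSet {U : Set ℝ} (hcomp : IsCompact U) (hneg : ∃ r ∈ U, r ≤ 0)
    (hpos : ∃ r ∈ U, 0 ≤ r) {f : ℝ → ℝ} (hf : Continuous f) : ∃ v, (0, v) ∈ momentSet U f := by
  obtain ⟨r, hr, hr0⟩ := hneg
  obtain ⟨s, hs, hs0⟩ := hpos
  have hc : Convex ℝ (Prod.fst '' momentSet U f) :=
    (convex_momentSet hcomp hf).linear_image (LinearMap.fst ℝ ℝ ℝ)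
  obtain ⟨⟨x, v⟩, hv, rfl⟩ := hc.ordConnected.out ⟨_, mem_momentSet f hr, rfl⟩
    ⟨_, mem_momentSet f hs, rfl⟩ ⟨hr0, hs0⟩
  exact ⟨v, hv⟩

lemma bddAbove_range_sub {U : Set ℝ} (hcomp : IsCompact U) {f : ℝ → ℝ} (hf : Continuous f)
    (Δ : ℝ) : BddAbove (Set.range fun r : U => f r - Δ * r) := by
  have h := (hcomp.image (f := fun r => f r - Δ * r) (by fun_prop)).bddAbove
  rwa [Set.image_eq_range] at h

/-- Weak duality: the hedging term `Δ r` has zero mean under a risk-neutral measure. -/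
lemma integral_le_iSup_sub {U : Set ℝ} (hcomp : IsCompact U) {f : ℝ → ℝ} (hf : Continuous f)
    {v : ℝ} (hv : (0, v) ∈ momentSet U f) (Δ : ℝ) : v ≤ ⨆ r : U, (f r - Δ * r) := by
  obtain ⟨P, hP, hPU, hP1, hP2⟩ := hv
  dsimp only at hP1 hP2
  have hid : Integrable (fun r : ℝ => r) P := integrable_of_prob_eq_one hcomp hPU continuous_id
  have hfi := integrable_of_prob_eq_one hcomp hPU hf
  calc v = ∫ r, (f r - Δ * r) ∂P := by
        rw [integral_sub hfi (hid.const_mul Δ), integral_const_mul, hP1, hP2]; ring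
    _ ≤ ∫ _, (⨆ r : U, (f r - Δ * r)) ∂P := by
        refine integral_mono_ae (hfi.sub (hid.const_mul Δ)) (integrable_const _) ?_
        filter_upwards [ae_mem_of_prob_eq_one hcomp hPU] with r hr
        exact le_ciSup (bddAbove_range_sub hcomp hf Δ) ⟨r, hr⟩
    _ = _ := by simp

/-- Strong duality, up to strict inequality: above every risk-neutral price there is a hedge.
The strictness is needed: for `U = [0, 1]` and `f = √·` the supremum of prices is `0`, yet no
`Δ` gives `f r ≤ Δ r` on `U`. -/
lemma exists_hedge {U : Set ℝ} (hcomp : IsCompact U) (hneg : ∃ r ∈ U, r ≤ 0)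
    (hpos : ∃ r ∈ U, 0 ≤ r) {f : ℝ → ℝ} (hf : Continuous f) {c : ℝ}
    (hc : ∀ v, (0, v) ∈ momentSet U f → v < c) : ∃ Δ : ℝ, ∀ r ∈ U, f r - Δ * r ≤ c := by
  have hdisj : Disjoint (momentSet U f) ({0} ×ˢ Set.Ici c) := by
    rw [Set.disjoint_left]
    rintro ⟨x, v⟩ hK ⟨hx, hv⟩
    obtain rfl : x = 0 := hx
    exact absurd (hc v hK) (not_lt.2 hv)
  obtain ⟨φ, u, w, hu, huw, hw⟩ := geometric_hahn_banach_compact_closed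
    (convex_momentSet hcomp hf) (isCompact_momentSet hcomp hf)
    ((convex_singleton (0 : ℝ)).prod (convex_Ici c)) (isClosed_singleton.prod isClosed_Ici) hdisj
  set a := φ (1, 0)
  set b := φ (0, 1)
  have hφ : ∀ x y : ℝ, φ (x, y) = x * a + y * b := by
    intro x y
    have : ((x, y) : ℝ × ℝ) = x • (1, 0) + y • (0, 1) := by ext <;> simp
    rw [this, map_add, map_smul, map_smul, smul_eq_mul, smul_eq_mul]
  have hU : ∀ r ∈ U, r * a + f r * b < u := fun r hr => by
    rw [← hφ]; exact hu _ (mem_momentSet f hr)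
  have hray : ∀ t, c ≤ t → w < t * b := fun t ht => by
    simpa [hφ] using hw (0, t) ⟨rfl, ht⟩
  -- The separating functional is bounded below on the ray, so its vertical coefficient is `≥ 0`;
  -- a vertical line would put `U` strictly on one side of `0`.
  have hb : 0 < b := by
    obtain ⟨v, hv⟩ := exists_zero_mem_momentSet hcomp hneg hpos hf
    rcases lt_trichotomy b 0 with hb | hb | hb
    · have hwc := hray c le_rfl
      have h := hray (c + (c * b - w) / (-b))
        (le_add_of_nonneg_right (div_nonneg (by linarith) (by linarith)))
      have : (c + (c * b - w) / (-b)) * b = w := by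
        field_simp [hb.ne]; ring
      linarith
    · obtain ⟨r, hr, hr0⟩ := hneg
      obtain ⟨s, hs, hs0⟩ := hpos
      have h1 := hU r hr
      have h2 := hU s hs
      have h3 := hray c le_rfl
      rw [hb] at h1 h2 h3
      rcases le_total 0 a with ha | ha <;> nlinarith
    · exact hb
  refine ⟨-a / b, fun r hr => ?_⟩
  have h1 := hU r hr
  have h2 := hray c le_rfl
  have h3 : (f r - -a / b * r) * b = r * a + f r * b := by field_simp; ring
  exact le_of_mul_le_mul_right (by linarith) hb

theorem stmt_14 (U : Set ℝ) (hne : U.Nonempty) (hcomp : IsCompact U)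
    (hneg : ∃ r ∈ U, r ≤ 0) (hpos : ∃ r ∈ U, 0 ≤ r)
    (g : ℝ → ℝ) (hg : Continuous g) (S₀ : ℝ) (hS₀ : 0 < S₀) :
    (⨅ Δ : ℝ, max (amPhi U g S₀ Δ 0) (amPhi U g S₀ Δ 1)) =
        max (⨅ Δ : ℝ, amPhi U g S₀ Δ 0) (⨅ Δ : ℝ, amPhi U g S₀ Δ 1) ∧
    (⨅ Δ : ℝ, max (amPhi U g S₀ Δ 0) (amPhi U g S₀ Δ 1)) =
        max (sSup {v : ℝ | ∃ P : Measure ℝ, IsProbabilityMeasure P ∧ P U = 1 ∧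
          (∫ r, r ∂P) = 0 ∧ v = ∫ r, g (S₀ * (1 + r)) ∂P}) (g S₀) := by
  set f : ℝ → ℝ := fun r => g (S₀ * (1 + r)) with hfdef
  have hf : Continuous f := by fun_prop
  have : Nonempty U := hne.to_subtype
  have h0 : ∀ Δ, amPhi U g S₀ Δ 0 = ⨆ r : U, (f r - Δ * r) := fun Δ => by simp [amPhi, hfdef]
  have h1 : ∀ Δ, amPhi U g S₀ Δ 1 = g S₀ := fun Δ => by simp [amPhi]
  simp only [h0, h1, ciInf_const]
  have hset : {v : ℝ | ∃ P : Measure ℝ, IsProbabilityMeasure P ∧ P U = 1 ∧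
      (∫ r, r ∂P) = 0 ∧ v = ∫ r, f r ∂P} = {v | (0, v) ∈ momentSet U f} := by
    ext v; simp [momentSet, eq_comm]
  have hsne := exists_zero_mem_momentSet hcomp hneg hpos hf
  have hbdd : BddBelow (Set.range fun Δ : ℝ => ⨆ r : U, (f r - Δ * r)) := by
    obtain ⟨v, hv⟩ := hsne
    exact ⟨v, by rintro _ ⟨Δ, rfl⟩; exact integral_le_iSup_sub hcomp hf hv Δ⟩
  have hmax : (⨅ Δ : ℝ, max (⨆ r : U, (f r - Δ * r)) (g S₀)) =
      max (⨅ Δ : ℝ, ⨆ r : U, (f r - Δ * r)) (g S₀) :=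
    (Monotone.map_ciInf_of_continuousAt (f := fun x : ℝ => max x (g S₀))
      (by fun_prop) (fun _ _ h => max_le_max_right _ h) hbdd).symm
  have hdual : (⨅ Δ : ℝ, ⨆ r : U, (f r - Δ * r)) = sSup {v | (0, v) ∈ momentSet U f} := by
    apply le_antisymm
    · refine le_of_forall_gt_imp_ge_of_dense fun c hc => ?_
      have hlt : ∀ v, (0, v) ∈ momentSet U f → v < c := fun v hv =>
        (le_csSup ⟨_, fun _ hv' => integral_le_iSup_sub hcomp hf hv' 0⟩ hv).trans_lt hc
      obtain ⟨Δ, hΔ⟩ := exists_hedge hcomp hneg hpos hf hlt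
      exact (ciInf_le hbdd Δ).trans (ciSup_le fun r => hΔ r r.2)
    · exact le_ciInf fun Δ => csSup_le hsne fun v hv => integral_le_iSup_sub hcomp hf hv Δ
  exact ⟨hmax, by rw [hmax, hdual, ← hset]⟩
end
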